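/- Let R = (a, 0) × (θ₀, 2π - θ₀) with a < 0 and 0 < θ₀ < π, and suppose ψ is harmonic on R, continuous on its closure, vanishes on the two vertical sides {a} × [θ₀, 2π-θ₀] and {0} × [θ₀, 2π-θ₀], is even about θ = π (ψ(r, θ) = ψ(r, 2π - θ)), and satisfies |ψ| ≤ M on R. Then there is a constant C depending only on M such that |ψ(r, θ)| ≤ C exp(-(π/|a|)(2π - θ₀ - θ)) for all (r,θ) ∈ R with θ ≥ π. -/

import Mathlib

open Real

/-- `u` is harmonic on `s ⊆ ℝ²`: twice continuously differentiable with vanishing Laplacian. -/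
def HarmonicOn (u : ℝ × ℝ → ℝ) (s : Set (ℝ × ℝ)) : Prop :=
  ContDiffOn ℝ 2 u s ∧ ∀ p ∈ s,
    (fderiv ℝ (fun q => fderiv ℝ u q (1, 0)) p) (1, 0) +
      (fderiv ℝ (fun q => fderiv ℝ u q (0, 1)) p) (0, 1) = 0

/-!
Two explicit barriers and the maximum principle replace the Fourier expansion. On a rectangle
`(a, b) × (c, d)` of width `L`, let `t` be a height at distance `L` from the top or bottom edge. The
harmonic polynomial `(x - a) * (b - x) + (y - t) ^ 2`, suitably scaled, dominates `|ψ|` on the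
boundary of a rectangle of height `L` centred at height `t`, so `|ψ (x, t)|` is at most a multiple
of `(x - a) * (b - x)`, hence of `sin (π / L * (x - a))`. Between the two such heights, `|ψ|` is
then dominated by a multiple of the harmonic function
`sin (π / L * (x - a)) * (exp (-(π / L) * (d - y)) + exp (-(π / L) * (y - c)))`, which has the
sharp decay rate.
-/

section SecondDirectionalDerivative

variable {E F : Type*} [NormedAddCommGroup E] [NormedSpace ℝ E] [NormedAddCommGroup F]
  [NormedSpace ℝ F]

theorem deriv_deriv_nonpos_of_isLocalMax {g : ℝ → ℝ} {x : ℝ} (hmax : IsLocalMax g x)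
    (hg : ContinuousAt g x) : deriv (deriv g) x ≤ 0 := by
  by_contra! hpos
  have hmin : IsLocalMin g x := isLocalMin_of_deriv_deriv_pos hpos hmax.deriv_eq_zero hg
  have hconst : g =ᶠ[nhds x] fun _ => g x := by
    filter_upwards [hmin, hmax] with s hs hs' using le_antisymm hs' hs
  have hzero : deriv (deriv g) x = 0 := by simp [hconst.deriv.deriv_eq]
  exact hpos.ne' hzero

theorem differentiableAt_fderiv_apply {u : E → F} {p : E} (hu : ContDiffAt ℝ 2 u p) (e : E) :
    DifferentiableAt ℝ (fun q => fderiv ℝ u q e) p :=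
  ((hu.fderiv_right (m := 1) (by norm_num)).differentiableAt (by norm_num)).clm_apply
    (differentiableAt_const e)

theorem fderiv_fderiv_add_apply {u v : E → F} {p : E} (hu : ContDiffAt ℝ 2 u p)
    (hv : ContDiffAt ℝ 2 v p) (e : E) : fderiv ℝ (fun q => fderiv ℝ (u + v) q e) p e =
      fderiv ℝ (fun q => fderiv ℝ u q e) p e + fderiv ℝ (fun q => fderiv ℝ v q e) p e := by
  have hfirst : (fun q => fderiv ℝ (u + v) q e) =ᶠ[nhds p]
      fun q => fderiv ℝ u q e + fderiv ℝ v q e := by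
    filter_upwards [hu.eventually (by simp), hv.eventually (by simp)] with q huq hvq
    rw [fderiv_add (huq.differentiableAt (by norm_num)) (hvq.differentiableAt (by norm_num))]
    rfl
  rw [hfirst.fderiv_eq, fderiv_fun_add (differentiableAt_fderiv_apply hu e)
    (differentiableAt_fderiv_apply hv e)]
  rfl

theorem deriv_deriv_comp_add_smul {u : E → F} {p : E} (hu : ContDiffAt ℝ 2 u p) (e : E) :
    deriv (deriv fun t : ℝ => u (p + t • e)) 0 = fderiv ℝ (fun q => fderiv ℝ u q e) p e := by
  have hline (t : ℝ) : HasDerivAt (fun t : ℝ => p + t • e) e t := by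
    simpa using ((hasDerivAt_id t).smul_const e).const_add p
  have hline_zero : p + (0 : ℝ) • e = p := by simp
  have hdiff : ∀ᶠ q in nhds p, DifferentiableAt ℝ u q :=
    (hu.eventually (by simp)).mono fun q hq => hq.differentiableAt (by norm_num)
  have hfirst : deriv (fun t : ℝ => u (p + t • e)) =ᶠ[nhds 0]
      fun t => fderiv ℝ u (p + t • e) e := by
    have htendsto := (hline 0).continuousAt.tendsto
    rw [hline_zero] at htendsto
    filter_upwards [htendsto.eventually hdiff] with t ht
    exact (ht.hasFDerivAt.comp_hasDerivAt t (hline t)).deriv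
  rw [hfirst.deriv_eq]
  exact ((differentiableAt_fderiv_apply hu e).hasFDerivAt.comp_hasDerivAt_of_eq 0 (hline 0)
    hline_zero.symm).deriv

theorem fderiv_fderiv_apply_nonpos_of_isLocalMax {u : E → ℝ} {p : E} (hu : ContDiffAt ℝ 2 u p)
    (hmax : IsLocalMax u p) (e : E) : fderiv ℝ (fun q => fderiv ℝ u q e) p e ≤ 0 := by
  have hline : ContinuousAt (fun t : ℝ => p + t • e) 0 := by fun_prop
  have hline_zero : p + (0 : ℝ) • e = p := by simp
  rw [← deriv_deriv_comp_add_smul hu e]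
  refine deriv_deriv_nonpos_of_isLocalMax ?_ (hu.continuousAt.comp_of_eq hline hline_zero)
  have htendsto := hline.tendsto
  rw [hline_zero] at htendsto
  filter_upwards [htendsto.eventually hmax] with t ht
  simpa using ht

end SecondDirectionalDerivative

section Laplacian

variable {u v : ℝ × ℝ → ℝ} {p : ℝ × ℝ} {f g : ℝ → ℝ}

/-- The Laplacian of a function on the plane, written as in `HarmonicOn`. Mathlib's `Laplacian`
does not apply, as `ℝ × ℝ` carries the sup norm. -/
noncomputable def planeLaplacian (u : ℝ × ℝ → ℝ) (p : ℝ × ℝ) : ℝ :=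
  fderiv ℝ (fun q => fderiv ℝ u q (1, 0)) p (1, 0) +
    fderiv ℝ (fun q => fderiv ℝ u q (0, 1)) p (0, 1)

theorem planeLaplacian_neg (u : ℝ × ℝ → ℝ) (p : ℝ × ℝ) :
    planeLaplacian (-u) p = -planeLaplacian u p := by
  simp only [planeLaplacian, fderiv_neg, neg_apply, fderiv_fun_neg]
  ring

theorem planeLaplacian_add (hu : ContDiffAt ℝ 2 u p) (hv : ContDiffAt ℝ 2 v p) :
    planeLaplacian (u + v) p = planeLaplacian u p + planeLaplacian v p := by
  simp only [planeLaplacian, fderiv_fderiv_add_apply hu hv]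
  ring

theorem planeLaplacian_sub (hu : ContDiffAt ℝ 2 u p) (hv : ContDiffAt ℝ 2 v p) :
    planeLaplacian (u - v) p = planeLaplacian u p - planeLaplacian v p := by
  rw [sub_eq_add_neg, planeLaplacian_add hu (v := -v) hv.neg, planeLaplacian_neg, sub_eq_add_neg]

theorem fderiv_fst_mul_snd_apply (hf : Differentiable ℝ f) (hg : Differentiable ℝ g)
    (p e : ℝ × ℝ) : fderiv ℝ (fun q : ℝ × ℝ => f q.1 * g q.2) p e =
      deriv f p.1 * g p.2 * e.1 + f p.1 * deriv g p.2 * e.2 := by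
  have hfst := (hf p.1).hasDerivAt.comp_hasFDerivAt p (hasFDerivAt_fst (𝕜 := ℝ))
  have hsnd := (hg p.2).hasDerivAt.comp_hasFDerivAt p (hasFDerivAt_snd (𝕜 := ℝ))
  have hmul : fderiv ℝ (fun q : ℝ × ℝ => f q.1 * g q.2) p = _ := (hfst.mul hsnd).fderiv
  rw [hmul]
  simp only [Function.comp_apply, add_apply, smul_apply, ContinuousLinearMap.coe_fst',
    ContinuousLinearMap.coe_snd', smul_eq_mul]
  ring

theorem planeLaplacian_fst_mul_snd (hf : ContDiff ℝ 2 f) (hg : ContDiff ℝ 2 g) (p : ℝ × ℝ) :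
    planeLaplacian (fun q => f q.1 * g q.2) p =
      deriv (deriv f) p.1 * g p.2 + f p.1 * deriv (deriv g) p.2 := by
  have hf₁ : Differentiable ℝ f := hf.differentiable (by norm_num)
  have hg₁ : Differentiable ℝ g := hg.differentiable (by norm_num)
  simp only [planeLaplacian, fderiv_fst_mul_snd_apply hf₁ hg₁, mul_one, mul_zero, add_zero,
    zero_add, fderiv_fst_mul_snd_apply hf.differentiable_deriv_two hg₁,
    fderiv_fst_mul_snd_apply hf₁ hg.differentiable_deriv_two]

theorem planeLaplacian_fst_add_snd (hf : ContDiff ℝ 2 f) (hg : ContDiff ℝ 2 g) (p : ℝ × ℝ) :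
    planeLaplacian (fun q => f q.1 + g q.2) p = deriv (deriv f) p.1 + deriv (deriv g) p.2 := by
  have hsplit : (fun q : ℝ × ℝ => f q.1 + g q.2) =
      (fun q => f q.1 * 1) + fun q => 1 * g q.2 := by
    ext q
    simp
  rw [hsplit, planeLaplacian_add (by fun_prop) (by fun_prop),
    planeLaplacian_fst_mul_snd hf contDiff_const, planeLaplacian_fst_mul_snd contDiff_const hg]
  simp

end Laplacian

section MaximumPrinciple

variable {u v : ℝ × ℝ → ℝ} {s : Set (ℝ × ℝ)} {p : ℝ × ℝ}

theorem not_isLocalMax_of_planeLaplacian_pos (hu : ContDiffAt ℝ 2 u p)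
    (hpos : 0 < planeLaplacian u p) : ¬IsLocalMax u p := fun hmax =>
  hpos.not_ge (add_nonpos (fderiv_fderiv_apply_nonpos_of_isLocalMax hu hmax _)
    (fderiv_fderiv_apply_nonpos_of_isLocalMax hu hmax _))

theorem planeLaplacian_add_const_mul_sq_pos {ε : ℝ} (hε : 0 < ε) (hu : ContDiffAt ℝ 2 u p)
    (hΔ : 0 ≤ planeLaplacian u p) :
    0 < planeLaplacian (u + fun q => ε * q.1 ^ 2 + ε * q.2 ^ 2) p := by
  rw [planeLaplacian_add hu (by fun_prop),
    planeLaplacian_fst_add_snd (f := fun x => ε * x ^ 2) (g := fun y => ε * y ^ 2) (by fun_prop)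
      (by fun_prop)]
  have hderiv : deriv (deriv fun x : ℝ => ε * x ^ 2) = fun _ => ε * 2 := by
    ext x
    simp
  rw [hderiv]
  linarith

theorem nonpos_of_planeLaplacian_nonneg (hs : IsOpen s) (hbounded : Bornology.IsBounded s)
    (hu : ContDiffOn ℝ 2 u s) (hcont : ContinuousOn u (closure s))
    (hΔ : ∀ q ∈ s, 0 ≤ planeLaplacian u q) (hfrontier : ∀ q ∈ frontier s, u q ≤ 0)
    (hp : p ∈ closure s) : u p ≤ 0 := by
  by_contra! hpos
  have hcompact : IsCompact (closure s) := hbounded.isCompact_closure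
  obtain ⟨R, hR⟩ : ∃ R : ℝ, ∀ q ∈ closure s, q.1 ^ 2 + q.2 ^ 2 < R := by
    obtain ⟨B, hB⟩ := (hcompact.image (f := fun q : ℝ × ℝ => q.1 ^ 2 + q.2 ^ 2)
      (by fun_prop)).bddAbove
    exact ⟨B + 1, fun q hq => (hB ⟨q, hq, rfl⟩).trans_lt (lt_add_one B)⟩
  have hRpos : 0 < R := lt_of_le_of_lt (by positivity) (hR p hp)
  obtain ⟨ε, hε, hεR⟩ : ∃ ε > 0, ε * R = u p :=
    ⟨u p / R, by positivity, div_mul_cancel₀ _ hRpos.ne'⟩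
  obtain ⟨q, hq, hmax⟩ := hcompact.exists_isMaxOn ⟨p, hp⟩
    (hcont.add (g := fun q : ℝ × ℝ => ε * q.1 ^ 2 + ε * q.2 ^ 2) (by fun_prop))
  have hq_frontier : q ∉ frontier s := fun hqf => by
    have hle : u p + (ε * p.1 ^ 2 + ε * p.2 ^ 2) ≤ u q + (ε * q.1 ^ 2 + ε * q.2 ^ 2) := hmax hp
    have hsq : 0 ≤ ε * p.1 ^ 2 + ε * p.2 ^ 2 := by positivity
    have hlt : ε * (q.1 ^ 2 + q.2 ^ 2) < ε * R := mul_lt_mul_of_pos_left (hR q hq) hε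
    linarith [hfrontier q hqf]
  have hqs : q ∈ s := by
    rw [closure_eq_self_union_frontier] at hq
    exact hq.resolve_right hq_frontier
  have hu_at : ContDiffAt ℝ 2 u q := hu.contDiffAt (hs.mem_nhds hqs)
  exact not_isLocalMax_of_planeLaplacian_pos (hu_at.add (by fun_prop))
    (planeLaplacian_add_const_mul_sq_pos hε hu_at (hΔ q hqs))
    (hmax.isLocalMax (Filter.mem_of_superset (hs.mem_nhds hqs) subset_closure))

theorem le_of_planeLaplacian_le (hs : IsOpen s) (hbounded : Bornology.IsBounded s)
    (hu : ContDiffOn ℝ 2 u s) (hv : ContDiffOn ℝ 2 v s) (hu_cont : ContinuousOn u (closure s))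
    (hv_cont : ContinuousOn v (closure s))
    (hΔ : ∀ q ∈ s, planeLaplacian v q ≤ planeLaplacian u q)
    (hfrontier : ∀ q ∈ frontier s, u q ≤ v q) (hp : p ∈ closure s) : u p ≤ v p := by
  refine sub_nonpos.1 (nonpos_of_planeLaplacian_nonneg (u := u - v) hs hbounded (hu.sub hv)
    (hu_cont.sub hv_cont) (fun q hq => ?_) (fun q hq => sub_nonpos.2 (hfrontier q hq)) hp)
  have hnhds := hs.mem_nhds hq
  rw [planeLaplacian_sub (hu.contDiffAt hnhds) (hv.contDiffAt hnhds)]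
  exact sub_nonneg.2 (hΔ q hq)

theorem HarmonicOn.mono {t : Set (ℝ × ℝ)} (hu : HarmonicOn u s) (hts : t ⊆ s) : HarmonicOn u t :=
  ⟨hu.1.mono hts, fun q hq => hu.2 q (hts hq)⟩

theorem HarmonicOn.abs_le_of_planeLaplacian_nonpos (hu : HarmonicOn u s) (hs : IsOpen s)
    (hbounded : Bornology.IsBounded s) (hu_cont : ContinuousOn u (closure s))
    (hv : ContDiffOn ℝ 2 v s) (hv_cont : ContinuousOn v (closure s))
    (hΔ : ∀ q ∈ s, planeLaplacian v q ≤ 0) (hfrontier : ∀ q ∈ frontier s, |u q| ≤ v q)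
    (hp : p ∈ closure s) : |u p| ≤ v p := by
  have hupper : u p ≤ v p :=
    le_of_planeLaplacian_le hs hbounded hu.1 hv hu_cont hv_cont
      (fun q hq => (hΔ q hq).trans (hu.2 q hq).ge)
      (fun q hq => (abs_le'.1 (hfrontier q hq)).1) hp
  have hlower : (-u) p ≤ v p :=
    le_of_planeLaplacian_le hs hbounded hu.1.neg hv hu_cont.neg hv_cont
      (fun q hq => (hΔ q hq).trans_eq <| by
        rw [planeLaplacian_neg, zero_eq_neg]
        exact hu.2 q hq)
      (fun q hq => (abs_le'.1 (hfrontier q hq)).2) hp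
  exact abs_le'.2 ⟨hupper, hlower⟩

end MaximumPrinciple

section Rectangle

open Set

variable {ψ : ℝ × ℝ → ℝ} {a b c d M x y : ℝ}

theorem HarmonicOn.abs_le_on_rectangle {v : ℝ × ℝ → ℝ} (hab : a < b) (hcd : c < d)
    (hψ : HarmonicOn ψ (Ioo a b ×ˢ Ioo c d)) (hcont : ContinuousOn ψ (Icc a b ×ˢ Icc c d))
    (hv : ContDiff ℝ 2 v) (hΔ : ∀ p, planeLaplacian v p ≤ 0)
    (hsides : ∀ y ∈ Icc c d, |ψ (a, y)| ≤ v (a, y) ∧ |ψ (b, y)| ≤ v (b, y))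
    (hends : ∀ x ∈ Icc a b, |ψ (x, c)| ≤ v (x, c) ∧ |ψ (x, d)| ≤ v (x, d))
    (hx : x ∈ Icc a b) (hy : y ∈ Icc c d) : |ψ (x, y)| ≤ v (x, y) := by
  have hclosure : closure (Ioo a b ×ˢ Ioo c d) = Icc a b ×ˢ Icc c d := by
    rw [closure_prod_eq, closure_Ioo hab.ne, closure_Ioo hcd.ne]
  refine hψ.abs_le_of_planeLaplacian_nonpos (isOpen_Ioo.prod isOpen_Ioo)
    ((Metric.isBounded_Ioo a b).prod (Metric.isBounded_Ioo c d)) (hclosure ▸ hcont)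
    hv.contDiffOn hv.continuous.continuousOn (fun p _ => hΔ p) ?_
    (hclosure ▸ mk_mem_prod hx hy)
  rw [frontier_prod_eq, frontier_Ioo hab, frontier_Ioo hcd, closure_Ioo hab.ne,
    closure_Ioo hcd.ne]
  rintro ⟨x, y⟩ (⟨hx, rfl | rfl⟩ | ⟨rfl | rfl, hy⟩)
  exacts [(hends x hx).1, (hends x hx).2, (hsides y hy).1, (hsides y hy).2]

theorem planeLaplacian_parabola (K a b t : ℝ) (p : ℝ × ℝ) :
    planeLaplacian (fun q => K * ((q.1 - a) * (b - q.1)) + K * (q.2 - t) ^ 2) p = 0 := by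
  have hfst : deriv (fun x => K * ((x - a) * (b - x))) = fun x => K * (a + b - 2 * x) := by
    ext x
    have h := (((hasDerivAt_id x).sub_const a).mul ((hasDerivAt_id x).const_sub b)).const_mul K
    refine h.deriv.trans ?_
    simp only [id_eq]
    ring
  have hsnd : deriv (fun y => K * (y - t) ^ 2) = fun y => K * (2 * (y - t)) := by
    ext y
    simp [deriv_comp_sub_const (f := fun y => y ^ 2)]
  rw [planeLaplacian_fst_add_snd (f := fun x => K * ((x - a) * (b - x)))
    (g := fun y => K * (y - t) ^ 2) (by fun_prop) (by fun_prop), hfst, hsnd]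
  simp

theorem HarmonicOn.abs_le_parabola_of_eq_zero_on_sides {h t : ℝ} (hab : a < b) (hh : 0 < h)
    (hψ : HarmonicOn ψ (Ioo a b ×ˢ Ioo (t - h) (t + h)))
    (hcont : ContinuousOn ψ (Icc a b ×ˢ Icc (t - h) (t + h)))
    (hsides : ∀ y ∈ Icc (t - h) (t + h), ψ (a, y) = 0 ∧ ψ (b, y) = 0)
    (hends : ∀ x ∈ Icc a b, |ψ (x, t - h)| ≤ M ∧ |ψ (x, t + h)| ≤ M)
    (hx : x ∈ Icc a b) :
    |ψ (x, t)| ≤ M / h ^ 2 * ((x - a) * (b - x)) := by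
  have hM : 0 ≤ M := (abs_nonneg _).trans (hends x hx).1
  have hbarrier := hψ.abs_le_on_rectangle hab (by linarith) hcont
    (v := fun q => M / h ^ 2 * ((q.1 - a) * (b - q.1)) + M / h ^ 2 * (q.2 - t) ^ 2)
    (by fun_prop) (fun p => (planeLaplacian_parabola _ a b t p).le) (fun y hy => ?_)
    (fun x hx => ?_) hx (y := t) ⟨by linarith, by linarith⟩
  · simpa using hbarrier
  · simp only [hsides y hy, abs_zero, sub_self, zero_mul, mul_zero, zero_add, and_self]
    positivity
  · have hprod : 0 ≤ M / h ^ 2 * ((x - a) * (b - x)) :=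
      mul_nonneg (by positivity) (mul_nonneg (sub_nonneg.2 hx.1) (sub_nonneg.2 hx.2))
    have hcancel : M / h ^ 2 * h ^ 2 = M := div_mul_cancel₀ M (by positivity)
    simp only [sub_sub_cancel_left, add_sub_cancel_left, neg_sq, hcancel]
    exact (hends x hx).imp (fun hlow => by linarith) (fun hhigh => by linarith)

theorem two_mul_mul_one_sub_le_sin_pi_mul {s : ℝ} (h₀ : 0 ≤ s) (h₁ : s ≤ 1) :
    2 * (s * (1 - s)) ≤ sin (π * s) := by
  have jordan {r : ℝ} (hr₀ : 0 ≤ r) (hr : r ≤ 1 / 2) : 2 * r ≤ sin (π * r) := by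
    have h := mul_le_sin (x := π * r) (by positivity) (by nlinarith [pi_pos])
    rwa [← mul_assoc, div_mul_cancel₀ _ pi_ne_zero] at h
  rcases le_total s (1 / 2) with hs | hs
  · nlinarith [jordan h₀ hs]
  · have hreflect : sin (π * (1 - s)) = sin (π * s) := by
      rw [mul_one_sub, sin_pi_sub]
    nlinarith [jordan (sub_nonneg.2 h₁) (by linarith)]

theorem sub_mul_sub_le_sin (hab : a < b) (hx : x ∈ Icc a b) :
    (x - a) * (b - x) ≤ (b - a) ^ 2 / 2 * sin (π / (b - a) * (x - a)) := by
  have hL : 0 < b - a := sub_pos.2 hab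
  have h := two_mul_mul_one_sub_le_sin_pi_mul (s := (x - a) / (b - a))
    (div_nonneg (sub_nonneg.2 hx.1) hL.le) ((div_le_one hL).2 (by linarith [hx.2]))
  calc (x - a) * (b - x)
      = (b - a) ^ 2 / 2 * (2 * ((x - a) / (b - a) * (1 - (x - a) / (b - a)))) := by
        field_simp
        ring
    _ ≤ (b - a) ^ 2 / 2 * sin (π * ((x - a) / (b - a))) := by gcongr
    _ = (b - a) ^ 2 / 2 * sin (π / (b - a) * (x - a)) := by
        rw [div_mul_eq_mul_div π, mul_div_assoc π]

theorem planeLaplacian_sin_mul_exp_add_exp (M k a c d : ℝ) (p : ℝ × ℝ) :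
    planeLaplacian (fun q => M * sin (k * (q.1 - a)) *
      (exp (-k * (d - q.2)) + exp (-k * (q.2 - c)))) p = 0 := by
  have hsin : deriv (deriv fun x => M * sin (k * (x - a))) =
      fun x => -k ^ 2 * (M * sin (k * (x - a))) := by
    have hlin (x : ℝ) : HasDerivAt (fun x => k * (x - a)) k x := by
      simpa using ((hasDerivAt_id x).sub_const a).const_mul k
    rw [funext fun x => ((hlin x).sin.const_mul M).deriv]
    ext x
    rw [(((hlin x).cos.mul_const k).const_mul M).deriv]
    ring
  have hexp : deriv (deriv fun y => exp (-k * (d - y)) + exp (-k * (y - c))) =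
      fun y => k ^ 2 * (exp (-k * (d - y)) + exp (-k * (y - c))) := by
    have hup (y : ℝ) : HasDerivAt (fun y => -k * (d - y)) k y := by
      simpa using ((hasDerivAt_id y).const_sub d).const_mul (-k)
    have hdown (y : ℝ) : HasDerivAt (fun y => -k * (y - c)) (-k) y := by
      simpa using ((hasDerivAt_id y).sub_const c).const_mul (-k)
    rw [funext fun y => ((hup y).exp.fun_add (hdown y).exp).deriv]
    ext y
    rw [(((hup y).exp.mul_const k).fun_add ((hdown y).exp.mul_const (-k))).deriv]
    ring
  rw [planeLaplacian_fst_mul_snd (f := fun x => M * sin (k * (x - a)))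
    (g := fun y => exp (-k * (d - y)) + exp (-k * (y - c))) (by fun_prop) (by fun_prop), hsin,
    hexp]
  ring

theorem HarmonicOn.abs_le_sin_mul_exp_add_exp (hab : a < b) (hcd : c < d)
    (hψ : HarmonicOn ψ (Ioo a b ×ˢ Ioo c d)) (hcont : ContinuousOn ψ (Icc a b ×ˢ Icc c d))
    (hsides : ∀ y ∈ Icc c d, ψ (a, y) = 0 ∧ ψ (b, y) = 0)
    (hends : ∀ x ∈ Icc a b, |ψ (x, c)| ≤ M * sin (π / (b - a) * (x - a)) ∧
      |ψ (x, d)| ≤ M * sin (π / (b - a) * (x - a)))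
    (hx : x ∈ Icc a b) (hy : y ∈ Icc c d) :
    |ψ (x, y)| ≤ M * sin (π / (b - a) * (x - a)) *
      (exp (-(π / (b - a)) * (d - y)) + exp (-(π / (b - a)) * (y - c))) := by
  refine hψ.abs_le_on_rectangle hab hcd hcont
    (v := fun q => M * sin (π / (b - a) * (q.1 - a)) *
      (exp (-(π / (b - a)) * (d - q.2)) + exp (-(π / (b - a)) * (q.2 - c))))
    (by fun_prop) (fun p => (planeLaplacian_sin_mul_exp_add_exp M _ a c d p).le)
    (fun y hy => ?_) (fun x hx => ?_) hx hy
  · simp [hsides y hy, div_mul_cancel₀ π (sub_pos.2 hab).ne']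
  · obtain ⟨hlow, hhigh⟩ := hends x hx
    have hnonneg := (abs_nonneg _).trans hlow
    simp only [sub_self, mul_zero, exp_zero]
    exact ⟨hlow.trans (le_mul_of_one_le_right hnonneg (le_add_of_nonneg_left (exp_nonneg _))),
      hhigh.trans (le_mul_of_one_le_right hnonneg (le_add_of_nonneg_right (exp_nonneg _)))⟩

theorem abs_le_of_eq_zero_on_sides (hsides : ∀ y ∈ Ioo c d, ψ (a, y) = 0 ∧ ψ (b, y) = 0)
    (hbound : ∀ p ∈ Ioo a b ×ˢ Ioo c d, |ψ p| ≤ M) (hM : 0 ≤ M) (hx : x ∈ Icc a b)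
    (hy : y ∈ Ioo c d) : |ψ (x, y)| ≤ M := by
  rcases eq_endpoints_or_mem_Ioo_of_mem_Icc hx with rfl | rfl | hx'
  · simpa [hsides y hy] using hM
  · simpa [hsides y hy] using hM
  · exact hbound (x, y) ⟨hx', hy⟩

theorem HarmonicOn.abs_le_two_mul_sin {t : ℝ} (hab : a < b)
    (hψ : HarmonicOn ψ (Ioo a b ×ˢ Ioo c d)) (hcont : ContinuousOn ψ (Icc a b ×ˢ Ioo c d))
    (hsides : ∀ y ∈ Ioo c d, ψ (a, y) = 0 ∧ ψ (b, y) = 0)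
    (hbound : ∀ x ∈ Icc a b, ∀ y ∈ Ioo c d, |ψ (x, y)| ≤ M)
    (hct : c < t - (b - a) / 2) (htd : t + (b - a) / 2 < d) (hx : x ∈ Icc a b) :
    |ψ (x, t)| ≤ 2 * M * sin (π / (b - a) * (x - a)) := by
  have hL : 0 < b - a := sub_pos.2 hab
  have hsub : Icc (t - (b - a) / 2) (t + (b - a) / 2) ⊆ Ioo c d := Icc_subset_Ioo hct htd
  have hlow : t - (b - a) / 2 ∈ Ioo c d := ⟨hct, by linarith⟩
  have hhigh : t + (b - a) / 2 ∈ Ioo c d := ⟨by linarith, htd⟩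
  have hM : 0 ≤ M := (abs_nonneg _).trans (hbound x hx _ hlow)
  calc |ψ (x, t)| ≤ M / ((b - a) / 2) ^ 2 * ((x - a) * (b - x)) :=
        HarmonicOn.abs_le_parabola_of_eq_zero_on_sides hab (half_pos hL)
          (hψ.mono (prod_mono_right (Ioo_subset_Icc_self.trans hsub)))
          (hcont.mono (prod_mono_right hsub)) (fun y hy => hsides y (hsub hy))
          (fun x hx => ⟨hbound x hx _ hlow, hbound x hx _ hhigh⟩) hx
    _ ≤ M / ((b - a) / 2) ^ 2 * ((b - a) ^ 2 / 2 * sin (π / (b - a) * (x - a))) := by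
        exact mul_le_mul_of_nonneg_left (sub_mul_sub_le_sin hab hx) (by positivity)
    _ = 2 * M * sin (π / (b - a) * (x - a)) := by
        field_simp

theorem HarmonicOn.abs_le_exp_add_exp_of_mem_Ioo (hab : a < b)
    (hψ : HarmonicOn ψ (Ioo a b ×ˢ Ioo c d)) (hcont : ContinuousOn ψ (Icc a b ×ˢ Ioo c d))
    (hsides : ∀ y ∈ Ioo c d, ψ (a, y) = 0 ∧ ψ (b, y) = 0)
    (hbound : ∀ x ∈ Icc a b, ∀ y ∈ Ioo c d, |ψ (x, y)| ≤ M)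
    (hx : x ∈ Icc a b) (hy : y ∈ Ioo (c + (b - a)) (d - (b - a))) :
    |ψ (x, y)| ≤ 2 * M *
      (exp (-(π / (b - a)) * (d - (b - a) - y)) + exp (-(π / (b - a)) * (y - (c + (b - a))))) := by
  have hcd := hy.1.trans hy.2
  have hsub : Icc (c + (b - a)) (d - (b - a)) ⊆ Ioo c d :=
    Icc_subset_Ioo (by linarith) (by linarith)
  have hM : 0 ≤ M := (abs_nonneg _).trans (hbound x hx y (hsub (Ioo_subset_Icc_self hy)))
  have hsine := (hψ.mono
    (prod_mono_right (Ioo_subset_Icc_self.trans hsub))).abs_le_sin_mul_exp_add_exp hab hcd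
    (hcont.mono (prod_mono_right hsub)) (fun y hy => hsides y (hsub hy))
    (fun x hx => ⟨hψ.abs_le_two_mul_sin hab hcont hsides hbound (by linarith) (by linarith) hx,
      hψ.abs_le_two_mul_sin hab hcont hsides hbound (by linarith) (by linarith) hx⟩)
    hx (Ioo_subset_Icc_self hy)
  have hamplitude : 2 * M * sin (π / (b - a) * (x - a)) ≤ 2 * M :=
    mul_le_of_le_one_right (by positivity) (sin_le_one _)
  exact hsine.trans (mul_le_mul_of_nonneg_right hamplitude (by positivity))

theorem HarmonicOn.abs_le_exp_add_exp {p : ℝ × ℝ}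
    (hψ : HarmonicOn ψ (Ioo a b ×ˢ Ioo c d))
    (hcont : ContinuousOn ψ (Icc a b ×ˢ Ioo c d))
    (hsides : ∀ y ∈ Ioo c d, ψ (a, y) = 0 ∧ ψ (b, y) = 0)
    (hbound : ∀ q ∈ Ioo a b ×ˢ Ioo c d, |ψ q| ≤ M) (hp : p ∈ Ioo a b ×ˢ Ioo c d) :
    |ψ p| ≤ 2 * M * exp π *
      (exp (-(π / (b - a)) * (d - p.2)) + exp (-(π / (b - a)) * (p.2 - c))) := by
  obtain ⟨x, y⟩ := p
  have hab : a < b := hp.1.1.trans hp.1.2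
  have hL : 0 < b - a := sub_pos.2 hab
  have hM : 0 ≤ M := (abs_nonneg _).trans (hbound _ hp)
  have hshift (s : ℝ) :
      exp (-(π / (b - a)) * (s - (b - a))) = exp π * exp (-(π / (b - a)) * s) := by
    rw [← exp_add]
    congr 1
    field_simp
    ring
  rw [mul_assoc, mul_add, ← hshift, ← hshift, sub_right_comm d, sub_sub y]
  by_cases hy : y ∈ Ioo (c + (b - a)) (d - (b - a))
  · exact hψ.abs_le_exp_add_exp_of_mem_Ioo hab hcont hsides
      (fun _ hx _ hy => abs_le_of_eq_zero_on_sides hsides hbound hM hx hy)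
      (Ioo_subset_Icc_self hp.1) hy
  · have hone {s : ℝ} (hs : s ≤ 0) : 1 ≤ exp (-(π / (b - a)) * s) :=
      one_le_exp (mul_nonneg_of_nonpos_of_nonpos (neg_nonpos.2 (by positivity)) hs)
    have hsum : 1 ≤ exp (-(π / (b - a)) * (d - (b - a) - y)) +
        exp (-(π / (b - a)) * (y - (c + (b - a)))) := by
      rcases not_and_or.1 hy with hlow | hhigh
      · exact (hone (by linarith)).trans (le_add_of_nonneg_left (exp_nonneg _))
      · exact (hone (by linarith)).trans (le_add_of_nonneg_right (exp_nonneg _))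
    calc |ψ (x, y)| ≤ M := hbound _ hp
      _ ≤ 2 * M := by linarith
      _ ≤ _ := le_mul_of_one_le_right (by positivity) hsum

theorem stmt14_general {p : ℝ × ℝ} (hψ : HarmonicOn ψ (Ioo a b ×ˢ Ioo c d))
    (hcont : ContinuousOn ψ (Icc a b ×ˢ Ioo c d))
    (hsides : ∀ y ∈ Ioo c d, ψ (a, y) = 0 ∧ ψ (b, y) = 0)
    (hbound : ∀ q ∈ Ioo a b ×ˢ Ioo c d, |ψ q| ≤ M) (hp : p ∈ Ioo a b ×ˢ Ioo c d)
    (hmid : (c + d) / 2 ≤ p.2) :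
    |ψ p| ≤ 4 * M * exp π * exp (-(π / (b - a)) * (d - p.2)) := by
  have hL : 0 < b - a := sub_pos.2 (hp.1.1.trans hp.1.2)
  have hM : 0 ≤ M := (abs_nonneg _).trans (hbound p hp)
  have hbottom : exp (-(π / (b - a)) * (p.2 - c)) ≤ exp (-(π / (b - a)) * (d - p.2)) :=
    exp_le_exp.2 (mul_le_mul_of_nonpos_left (by linarith) (neg_nonpos.2 (by positivity)))
  calc |ψ p| ≤ 2 * M * exp π *
        (exp (-(π / (b - a)) * (d - p.2)) + exp (-(π / (b - a)) * (p.2 - c))) :=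
        hψ.abs_le_exp_add_exp hcont hsides hbound hp
    _ ≤ 2 * M * exp π *
        (exp (-(π / (b - a)) * (d - p.2)) + exp (-(π / (b - a)) * (d - p.2))) := by gcongr
    _ = 4 * M * exp π * exp (-(π / (b - a)) * (d - p.2)) := by ring

end Rectangle

/-- On the rectangle `R = (a,0) × (θ₀, 2π-θ₀)` (`a < 0`, `0 < θ₀ < π`), a harmonic function
vanishing on the two vertical sides, even about `θ = π`, and bounded by `M`, satisfies
`|ψ(r,θ)| ≤ C e^{-(π/|a|)(2π-θ₀-θ)}` for `θ ≥ π`, with `C` depending only on `M`. -/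
theorem stmt14 (M : ℝ) (hM : 0 < M) :
    ∃ C > 0, ∀ (a θ₀ : ℝ) (ψ : ℝ × ℝ → ℝ), a < 0 → 0 < θ₀ → θ₀ < π →
      HarmonicOn ψ (Set.Ioo a 0 ×ˢ Set.Ioo θ₀ (2 * π - θ₀)) →
      ContinuousOn ψ (closure (Set.Ioo a 0 ×ˢ Set.Ioo θ₀ (2 * π - θ₀))) →
      (∀ θ ∈ Set.Icc θ₀ (2 * π - θ₀), ψ (a, θ) = 0 ∧ ψ (0, θ) = 0) →
      (∀ p ∈ closure (Set.Ioo a 0 ×ˢ Set.Ioo θ₀ (2 * π - θ₀)), ψ (p.1, 2 * π - p.2) = ψ p) →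
      (∀ p ∈ Set.Ioo a 0 ×ˢ Set.Ioo θ₀ (2 * π - θ₀), |ψ p| ≤ M) →
      ∀ p ∈ Set.Ioo a 0 ×ˢ Set.Ioo θ₀ (2 * π - θ₀), π ≤ p.2 →
        |ψ p| ≤ C * Real.exp (-(π / |a|) * (2 * π - θ₀ - p.2)) := by
  refine ⟨4 * M * exp π, by positivity, fun a θ₀ ψ ha _ hθ₀ hψ hcont hsides _ hbound p hp hθ => ?_⟩
  rw [closure_prod_eq, closure_Ioo ha.ne, closure_Ioo (by linarith)] at hcont
  rw [abs_of_neg ha, ← zero_sub a]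
  exact stmt14_general hψ (hcont.mono (Set.prod_mono_right Set.Ioo_subset_Icc_self))
    (fun y hy => hsides y (Set.Ioo_subset_Icc_self hy)) hbound hp (by linarith)
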